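/- Let P be a finite set and F : 2^P → ℝ normalized, monotone and submodular with curvature bound k_f ∈ [0,1) (F(P) − F(P \ {p}) ≥ (1 − k_f)·F({p}) for all p ∈ P). Let α ≥ 1, let S_1, S_2 ⊆ P be disjoint with |S_1| = α, and suppose F({a}) ≥ F({b}) for every a ∈ S_1 and b ∈ S_2. Then for every A ⊆ S_1 ∪ S_2 with |A| ≤ α, F((S_1 ∪ S_2) \ A) ≥ (1 − k_f)·F(S_2). -/

import Mathlib

/-!
Submodularity makes the gain from adding `p` smallest on top of everything else, where the curvature
bound compares it with `F {p}`. Adding elements one at a time therefore sandwiches `F` between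
`1 - k` times, and one times, the modular function `T ↦ ∑ p ∈ T, F {p}`. For the modular function
the claim is an exchange argument: each element removed from `S2` is paid for by a surviving element
of `S1`, which is worth at least as much.
-/

open Finset

/-- Submodularity of a function on a lattice; on `Finset P` this is submodularity of a set
function, with `⊔` and `⊓` being `∪` and `∩`. -/
def IsSubmodular {L M : Type*} [Lattice L] [Add M] [LE M] (F : L → M) : Prop :=
  ∀ a b, F (a ⊔ b) + F (a ⊓ b) ≤ F a + F b

/-- `k` bounds the curvature of the set function `F` on the ground set `U`: the gain from adding an
element to the rest of `U` is at least `1 - k` times its value on its own. Taking `U` to be a finset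
instead of the whole type allows infinite types. -/
def HasCurvatureBoundOn {P R : Type*} [DecidableEq P] [Ring R] [LE R]
    (F : Finset P → R) (U : Finset P) (k : R) : Prop :=
  ∀ p ∈ U, (1 - k) * F {p} ≤ F U - F (U \ {p})

section SetFunction

variable {P : Type*} [DecidableEq P]

theorem IsSubmodular.le_sum_singleton {M : Type*} [AddCommMonoid M] [PartialOrder M]
    [IsOrderedAddMonoid M] {F : Finset P → M} (hF : IsSubmodular F) (hF0 : F ∅ = 0)
    (T : Finset P) : F T ≤ ∑ p ∈ T, F {p} := by
  induction T using Finset.induction_on with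
  | empty => simp [hF0]
  | insert p T hp ih =>
    calc F (insert p T) = F ({p} ∪ T) + F ({p} ∩ T) := by
          rw [insert_eq, singleton_inter_of_notMem hp, hF0, add_zero]
      _ ≤ F {p} + F T := hF {p} T
      _ ≤ F {p} + ∑ q ∈ T, F {q} := by gcongr
      _ = ∑ q ∈ insert p T, F {q} := by rw [sum_insert hp]

theorem IsSubmodular.insert_sub_le_insert_sub {M : Type*} [AddCommGroup M] [PartialOrder M]
    [IsOrderedAddMonoid M] {F : Finset P → M} (hF : IsSubmodular F) {T V : Finset P} (hTV : T ⊆ V)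
    {p : P} (hp : p ∉ V) : F (insert p V) - F V ≤ F (insert p T) - F T := by
  have hunion : insert p T ∪ V = insert p V := by rw [insert_union, union_eq_right.2 hTV]
  have hinter : insert p T ∩ V = T := by
    rw [insert_inter_of_notMem hp, inter_eq_left.2 hTV]
  have h : F (insert p T ∪ V) + F (insert p T ∩ V) ≤ F (insert p T) + F V := hF (insert p T) V
  rw [hunion, hinter] at h
  exact sub_le_sub_iff.2 h

theorem HasCurvatureBoundOn.mul_sum_singleton_le {R : Type*} [Ring R] [PartialOrder R]
    [IsOrderedRing R] {F : Finset P → R} {U T : Finset P} {k : R} (hk : HasCurvatureBoundOn F U k)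
    (hF : IsSubmodular F) (hF0 : 0 ≤ F ∅) (hT : T ⊆ U) :
    (1 - k) * ∑ p ∈ T, F {p} ≤ F T := by
  induction T using Finset.induction_on with
  | empty => simpa using hF0
  | insert p T hp ih =>
    obtain ⟨hpU, hTU⟩ := insert_subset_iff.1 hT
    have hgain : (1 - k) * F {p} ≤ F (insert p T) - F T :=
      calc (1 - k) * F {p} ≤ F U - F (U \ {p}) := hk p hpU
        _ = F (insert p (U.erase p)) - F (U.erase p) := by
          rw [sdiff_singleton_eq_erase, insert_erase hpU]
        _ ≤ F (insert p T) - F T :=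
          hF.insert_sub_le_insert_sub (subset_erase.2 ⟨hTU, hp⟩) (notMem_erase p U)
    calc (1 - k) * ∑ q ∈ insert p T, F {q}
        = (1 - k) * F {p} + (1 - k) * ∑ q ∈ T, F {q} := by rw [sum_insert hp, mul_add]
      _ ≤ F (insert p T) - F T + F T := add_le_add hgain (ih hTU)
      _ = F (insert p T) := sub_add_cancel _ _

end SetFunction

section Exchange

variable {ι M : Type*} [AddCommMonoid M] [LinearOrder M] [IsOrderedAddMonoid M]

theorem sum_le_sum_of_card_le_of_forall_le {κ : Type*} {s : Finset ι} {t : Finset κ} {f : ι → M}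
    {g : κ → M} (hcard : #s ≤ #t) (hg : ∀ j ∈ t, 0 ≤ g j) (hfg : ∀ j ∈ t, ∀ i ∈ s, f i ≤ g j) :
    ∑ i ∈ s, f i ≤ ∑ j ∈ t, g j := by
  obtain rfl | ht := t.eq_empty_or_nonempty
  · simp_all
  · obtain ⟨m, hm, hmin⟩ := t.exists_min_image g ht
    calc ∑ i ∈ s, f i ≤ #s • g m := sum_le_card_nsmul _ _ _ (hfg m hm)
      _ ≤ #t • g m := nsmul_le_nsmul_left (hg m hm) hcard
      _ ≤ ∑ j ∈ t, g j := card_nsmul_le_sum _ _ _ hmin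

variable [DecidableEq ι] {s t A : Finset ι}

theorem card_inter_le_card_sdiff_of_disjoint (hst : Disjoint s t) (hA : #A ≤ #s) :
    #(t ∩ A) ≤ #(s \ A) := by
  have hsub : t ∩ A ⊆ A \ s := fun x hx ↦
    mem_sdiff.2 ⟨(mem_inter.1 hx).2, disjoint_right.1 hst (mem_inter.1 hx).1⟩
  exact (card_le_card hsub).trans (card_sdiff_le_card_sdiff_iff.2 hA)

theorem sum_le_sum_union_sdiff {w : ι → M} (hst : Disjoint s t) (hw : ∀ a ∈ s, 0 ≤ w a)
    (hle : ∀ a ∈ s, ∀ b ∈ t, w b ≤ w a) (hA : #A ≤ #s) :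
    ∑ p ∈ t, w p ≤ ∑ p ∈ (s ∪ t) \ A, w p := by
  have hexchange : ∑ p ∈ t ∩ A, w p ≤ ∑ p ∈ s \ A, w p :=
    sum_le_sum_of_card_le_of_forall_le (card_inter_le_card_sdiff_of_disjoint hst hA)
      (fun a ha ↦ hw a (mem_sdiff.1 ha).1)
      (fun a ha b hb ↦ hle a (mem_sdiff.1 ha).1 b (mem_inter.1 hb).1)
  calc ∑ p ∈ t, w p = ∑ p ∈ t ∩ A, w p + ∑ p ∈ t \ A, w p := (sum_inter_add_sum_sdiff t A w).symm
    _ ≤ ∑ p ∈ s \ A, w p + ∑ p ∈ t \ A, w p := by gcongr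
    _ = ∑ p ∈ (s ∪ t) \ A, w p := by
      rw [union_sdiff_distrib, sum_union (hst.mono sdiff_subset sdiff_subset)]

end Exchange

theorem remaining_reward_curvature_bound_general {P R : Type*} [DecidableEq P] [Ring R]
    [LinearOrder R] [IsOrderedRing R] {F : Finset P → R} (hF0 : F ∅ = 0) (hF : IsSubmodular F)
    {U S1 S2 A : Finset P} {k : R} (hk1 : k ≤ 1) (hk : HasCurvatureBoundOn F U k)
    (hU : S1 ∪ S2 ⊆ U) (hdisj : Disjoint S1 S2) (hnonneg : ∀ a ∈ S1, 0 ≤ F {a})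
    (hord : ∀ a ∈ S1, ∀ b ∈ S2, F {b} ≤ F {a}) (hA : #A ≤ #S1) :
    (1 - k) * F S2 ≤ F ((S1 ∪ S2) \ A) :=
  calc (1 - k) * F S2
      ≤ (1 - k) * ∑ p ∈ S2, F {p} :=
        mul_le_mul_of_nonneg_left (hF.le_sum_singleton hF0 S2) (sub_nonneg.2 hk1)
    _ ≤ (1 - k) * ∑ p ∈ (S1 ∪ S2) \ A, F {p} :=
        mul_le_mul_of_nonneg_left (sum_le_sum_union_sdiff hdisj hnonneg hord hA)
          (sub_nonneg.2 hk1)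
    _ ≤ F ((S1 ∪ S2) \ A) := hk.mul_sum_singleton_le hF hF0.ge (sdiff_subset.trans hU)

/-- After any removal of at most `α` paths, the remaining reward is at
least `(1 - k_f) · F(S_2)`. -/
theorem remaining_reward_curvature_bound
    {P : Type*} [Fintype P] [DecidableEq P]
    (F : Finset P → ℝ)
    (hF0 : F ∅ = 0)
    (hFmono : ∀ A B : Finset P, A ⊆ B → F A ≤ F B)
    (hFsub : ∀ A B : Finset P, F A + F B ≥ F (A ∪ B) + F (A ∩ B))
    (kf : ℝ) (hkf0 : 0 ≤ kf) (hkf1 : kf < 1)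
    (hcurv : ∀ p : P, F Finset.univ - F (Finset.univ \ {p}) ≥ (1 - kf) * F {p})
    (α : ℕ) (hα : 1 ≤ α)
    (S1 S2 : Finset P) (hdisj : Disjoint S1 S2) (hS1card : S1.card = α)
    (hord : ∀ a ∈ S1, ∀ b ∈ S2, F {a} ≥ F {b}) :
    ∀ A ⊆ S1 ∪ S2, A.card ≤ α → F ((S1 ∪ S2) \ A) ≥ (1 - kf) * F S2 :=
  fun _ _ hA ↦ remaining_reward_curvature_bound_general hF0 hFsub hkf1.le (fun p _ ↦ hcurv p)
    (subset_univ _) hdisj (fun _ _ ↦ hF0.ge.trans (hFmono _ _ (empty_subset _))) hord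
    (hA.trans_eq hS1card.symm)
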